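/- Let f : ℝ → ℝ be continuous and 2π-periodic, regarded as a function on the boundary of the unit disk D = {x ∈ ℝ² : ‖x‖ < 1}, and let Hf be its harmonic (Poisson) extension to D, given by Hf(x) = (1/2π) ∫_0^{2π} (1 − ‖x‖²)/‖x − (cos θ, sin θ)‖² · f(θ) dθ. Then the Douglas formula holds as an equality in [0,∞]: (1/2) ∫_D ‖∇Hf(x)‖² dx = (1/8π) ∫_0^{2π} ∫_0^{2π} (f(θ) − f(φ))²/(1 − cos(θ − φ)) dθ dφ. -/

import Mathlib

open MeasureTheory
open scoped ENNReal Real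

/-- The harmonic (Poisson) extension to the open unit disk (realized as the unit ball of `ℂ`)
of a continuous `2π`-periodic function `f` on the boundary circle:
`Hf(x) = (1/2π) ∫_0^{2π} (1 - ‖x‖²)/‖x - (cos θ, sin θ)‖² f(θ) dθ`. -/
noncomputable def poissonExtension (f : ℝ → ℝ) (x : ℂ) : ℝ :=
  (1 / (2 * Real.pi)) * ∫ θ in (0 : ℝ)..(2 * Real.pi),
    (1 - ‖x‖ ^ 2) / ‖x - Complex.exp (θ * Complex.I)‖ ^ 2 * f θ

/-!
Both sides equal `π ∑ₙ |n| |cₙ|²`, where `cₙ` are the Fourier coefficients of `f`.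

On the disc, `Hf = 2 Re S - c₀` with `S z = ∑_{n ≥ 0} cₙ zⁿ`, so that `‖∇Hf‖ = 2 |S'|`, and the
monomials `zᵏ` are orthogonal on the disc with squared norm `π / (k + 1)`.

On the circle, substituting `φ = θ + t` turns the Douglas integral into the integral over `t` of
`‖f(· + t) - f‖² / |e^{it} - 1|²`. By Parseval the numerator is `∑ₙ |e^{int} - 1|² |cₙ|²`, and
`|e^{int} - 1|² / |e^{it} - 1|²` is `|n|` times a Fejér kernel, hence has mean `|n|`.
-/

open AddCircle

section Characters

variable {T : ℝ}

theorem norm_fourier_apply (n : ℤ) (x : AddCircle T) : ‖fourier n x‖ = 1 := by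
  rw [fourier_apply, Circle.norm_coe]

theorem fourier_natCast_eq_pow (n : ℕ) (t : AddCircle T) :
    fourier (n : ℤ) t = (toCircle t : ℂ) ^ n := by
  rw [fourier_apply, natCast_zsmul, toCircle_nsmul, Circle.coe_pow]

theorem enorm_fourier_natAbs_sub_one (n : ℤ) (t : AddCircle T) :
    ‖fourier (n.natAbs : ℤ) t - 1‖ₑ = ‖fourier n t - 1‖ₑ := by
  rcases n.natAbs_eq with hn | hn
  · rw [← hn]
  · conv_rhs => rw [hn, fourier_neg, ← map_one (starRingEnd ℂ), ← map_sub]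
    exact (RCLike.enorm_conj _).symm

end Characters

section Parseval

variable {T : ℝ} [Fact (0 < T)] {F : AddCircle T → ℂ}

theorem lintegral_enorm_sq_eq_tsum_fourierCoeff (hF : MemLp F 2 haarAddCircle) :
    ∫⁻ x, ‖F x‖ₑ ^ 2 ∂haarAddCircle = ∑' n, ‖fourierCoeff F n‖ₑ ^ 2 := by
  have parseval : HasSum (fun n ↦ ‖fourierCoeff F n‖ ^ 2) (∫ x, ‖F x‖ ^ 2 ∂haarAddCircle) := by
    have h_norm : ∀ᵐ x ∂haarAddCircle, ‖hF.toLp F x‖ ^ 2 = ‖F x‖ ^ 2 := by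
      filter_upwards [hF.coeFn_toLp] with x hx using by rw [hx]
    simpa only [fourierCoeff_congr_ae hF.coeFn_toLp, integral_congr_ae h_norm]
      using hasSum_sq_fourierCoeff (hF.toLp F)
  have h_ofReal (z : ℂ) : ‖z‖ₑ ^ 2 = ENNReal.ofReal (‖z‖ ^ 2) := by
    rw [ENNReal.ofReal_pow (norm_nonneg z), ofReal_norm]
  simp_rw [h_ofReal]
  rw [← ofReal_integral_eq_lintegral_ofReal hF.integrable_norm_pow'
      (.of_forall fun _ ↦ sq_nonneg _),
    ← parseval.tsum_eq, ENNReal.ofReal_tsum_of_nonneg (fun _ ↦ sq_nonneg _) parseval.summable]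

variable {ι : Type*} {e : ι → ℤ} {a : ι → ℂ}

theorem fourierCoeff_tsum_mul_fourier (he : e.Injective) (ha : Summable (‖a ·‖)) :
    fourierCoeff (fun x : AddCircle T ↦ ∑' i, a i * fourier (e i) x) = Function.extend e a 0 := by
  have := he.countable
  ext n
  have h_coeff (i : ι) :
      ∫ x : AddCircle T, fourier (-n) x • (a i * fourier (e i) x) ∂haarAddCircle =
        a i * (Pi.single (e i) 1 : ℤ → ℂ) n := by
    rw [← fourierCoeff_fourier (T := T), ← fourierCoeff.const_mul, fourierCoeff]
  have h_norm (i : ι) (x : AddCircle T) : ‖fourier (-n) x • (a i * fourier (e i) x)‖ = ‖a i‖ := by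
    simp only [norm_smul, norm_mul, norm_fourier_apply, one_mul, mul_one]
  have h_swap := integral_tsum_of_summable_integral_norm (μ := haarAddCircle (T := T))
    (F := fun i x ↦ fourier (-n) x • (a i * fourier (e i) x))
    (fun i ↦ (by fun_prop : Continuous _).integrable_of_hasCompactSupport
      (HasCompactSupport.of_compactSpace _))
    (by simpa only [h_norm, integral_const, probReal_univ, one_smul] using ha)
  simp_rw [fourierCoeff, ← tsum_const_smul'', ← h_swap, h_coeff]
  by_cases hn : ∃ j, e j = n
  · obtain ⟨j, rfl⟩ := hn
    rw [he.extend_apply, tsum_eq_single j fun i hi ↦ by simp [he.ne hi.symm], Pi.single_eq_same,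
      mul_one]
  · rw [Function.extend_apply' _ _ _ hn]
    refine (tsum_congr fun i ↦ ?_).trans tsum_zero
    simp [Ne.symm (not_exists.1 hn i)]

theorem lintegral_enorm_sq_tsum_mul_fourier (he : e.Injective) (ha : Summable (‖a ·‖)) :
    ∫⁻ x : AddCircle T, ‖∑' i, a i * fourier (e i) x‖ₑ ^ 2 ∂haarAddCircle = ∑' i, ‖a i‖ₑ ^ 2 := by
  have h_cont : Continuous fun x : AddCircle T ↦ ∑' i, a i * fourier (e i) x :=
    continuous_tsum (fun i ↦ by fun_prop) ha fun i x ↦ by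
      rw [norm_mul, norm_fourier_apply, mul_one]
  rw [lintegral_enorm_sq_eq_tsum_fourierCoeff
      (h_cont.memLp_of_hasCompactSupport (HasCompactSupport.of_compactSpace _)),
    fourierCoeff_tsum_mul_fourier he ha, ← tsum_extend_zero he]
  refine tsum_congr fun n ↦ ?_
  by_cases hn : ∃ j, e j = n
  · obtain ⟨j, rfl⟩ := hn
    simp only [he.extend_apply]
  · simp [Function.extend_apply' _ _ _ hn]

theorem norm_fourierCoeff_le (F : AddCircle T → ℂ) (n : ℤ) :
    ‖fourierCoeff F n‖ ≤ ∫ x, ‖F x‖ ∂haarAddCircle := by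
  refine (norm_integral_le_integral_norm _).trans_eq (integral_congr_ae (.of_forall fun x ↦ ?_))
  simp only [norm_smul, norm_fourier_apply, one_mul]

theorem norm_fourierCoeff_neg_ofReal (u : AddCircle T → ℝ) (n : ℤ) :
    ‖fourierCoeff (fun x ↦ (u x : ℂ)) (-n)‖ = ‖fourierCoeff (fun x ↦ (u x : ℂ)) n‖ := by
  rw [← RCLike.norm_conj (fourierCoeff _ n), fourierCoeff, fourierCoeff, ← integral_conj]
  simp

theorem fourierCoeff_comp_add_right (F : AddCircle T → ℂ) (t : AddCircle T) (n : ℤ) :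
    fourierCoeff (fun x ↦ F (x + t)) n = fourier n t * fourierCoeff F n := by
  have h_shift (x : AddCircle T) :
      fourier (-n) x • F (x + t) = fourier n t • (fourier (-n) (x + t) • F (x + t)) := by
    have h_char : fourier (-n) x = fourier n t * fourier (-n) (x + t) := by
      simp_rw [fourier_apply, ← Circle.coe_mul, ← toCircle_add]
      congr 2
      module
    rw [h_char, smul_eq_mul, smul_eq_mul, smul_eq_mul, mul_assoc]
  simp_rw [fourierCoeff, h_shift]
  rw [integral_smul, smul_eq_mul, integral_add_right_eq_self fun x ↦ fourier (-n) x • F x]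

theorem setLIntegral_Ioc_coe_eq_haarAddCircle (t : ℝ) (h : AddCircle T → ℝ≥0∞) :
    ∫⁻ θ in Set.Ioc t (t + T), h θ = ENNReal.ofReal T * ∫⁻ x, h x ∂haarAddCircle := by
  rw [AddCircle.lintegral_preimage, volume_eq_smul_haarAddCircle, lintegral_smul_measure,
    smul_eq_mul]

theorem setLIntegral_Ioc_setLIntegral_Ioc_coe_eq_haarAddCircle (t : ℝ)
    (h : AddCircle T → AddCircle T → ℝ≥0∞) :
    ∫⁻ θ : ℝ in Set.Ioc t (t + T), ∫⁻ φ : ℝ in Set.Ioc t (t + T), h θ φ =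
      ENNReal.ofReal T * (ENNReal.ofReal T *
        ∫⁻ x, ∫⁻ y, h x y ∂haarAddCircle ∂haarAddCircle) := by
  simp_rw [fun x ↦ setLIntegral_Ioc_coe_eq_haarAddCircle t (h x)]
  rw [setLIntegral_Ioc_coe_eq_haarAddCircle t fun x ↦ _ * ∫⁻ y, h x y ∂haarAddCircle,
    lintegral_const_mul' _ _ ENNReal.ofReal_ne_top]

end Parseval

section Douglas

variable {T : ℝ} [Fact (0 < T)] {F : AddCircle T → ℂ}

/-- The Douglas integral of a function `F` on the circle, with respect to normalized Haar measure
in both variables; the kernel is written through the squared chord length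
`‖e^{iθ} - e^{iφ}‖² = 2 (1 - cos (θ - φ))`, and is `0 / 0 = 0` on the diagonal. -/
noncomputable def douglasIntegral (F : AddCircle T → ℂ) : ℝ≥0∞ :=
  ∫⁻ x, ∫⁻ y, ‖F x - F y‖ₑ ^ 2 / ‖(toCircle x - toCircle y : ℂ)‖ₑ ^ 2
    ∂haarAddCircle ∂haarAddCircle

theorem fourierCoeff_comp_add_right_sub (hF : Integrable F haarAddCircle) (t : AddCircle T)
    (n : ℤ) :
    fourierCoeff (fun x ↦ F (x + t) - F x) n = (fourier n t - 1) * fourierCoeff F n := by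
  have h_sub : (fun x ↦ F (x + t) - F x) = (fun x ↦ F (x + t)) + (-1 : ℂ) • F := by
    ext x
    simp [sub_eq_add_neg]
  rw [h_sub, fourierCoeff.add (hF.comp_add_right t) (hF.smul _), Pi.add_apply,
    fourierCoeff.const_smul, fourierCoeff_comp_add_right, smul_eq_mul, neg_one_mul, sub_one_mul,
    sub_eq_add_neg]

theorem ae_toCircle_ne_one : ∀ᵐ t : AddCircle T ∂haarAddCircle, (toCircle t : ℂ) ≠ 1 := by
  have h_null : haarAddCircle ({0} : Set (AddCircle T)) = 0 := by
    have h := volume_closedBall T (x := 0) 0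
    have hT : 0 < T := Fact.out
    simpa [volume_eq_smul_haarAddCircle, hT.le, hT.not_ge] using h
  filter_upwards [measure_eq_zero_iff_ae_notMem.1 h_null] with t ht h
  refine ht (injective_toCircle (Fact.out : 0 < T).ne' ?_)
  rw [toCircle_zero, ← Circle.coe_eq_one, h]

theorem lintegral_enorm_fourier_sub_one_sq_div (n : ℤ) :
    ∫⁻ t : AddCircle T, ‖fourier n t - 1‖ₑ ^ 2 / ‖(toCircle t - 1 : ℂ)‖ₑ ^ 2 ∂haarAddCircle =
      n.natAbs := by
  have h_geom : ∀ᵐ t : AddCircle T ∂haarAddCircle,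
      ‖fourier n t - 1‖ₑ ^ 2 / ‖(toCircle t - 1 : ℂ)‖ₑ ^ 2 =
        ‖∑' i : Fin n.natAbs, 1 * fourier (i : ℤ) t‖ₑ ^ 2 := by
    filter_upwards [ae_toCircle_ne_one] with t ht
    have h0 : ‖(toCircle t - 1 : ℂ)‖ₑ ^ 2 ≠ 0 := by simpa [sub_eq_zero] using ht
    rw [← enorm_fourier_natAbs_sub_one, tsum_fintype, fourier_natCast_eq_pow, ← geom_sum_mul,
      enorm_mul, mul_pow, ENNReal.mul_div_cancel_right h0 (by finiteness)]
    simp_rw [fourier_natCast_eq_pow, one_mul,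
      Fin.sum_univ_eq_sum_range fun i ↦ (toCircle t : ℂ) ^ i]
  rw [lintegral_congr_ae h_geom,
    lintegral_enorm_sq_tsum_mul_fourier (e := fun i : Fin n.natAbs ↦ (i : ℤ))
      (a := fun _ ↦ 1) (Nat.cast_injective.comp Fin.val_injective) (Summable.of_finite)]
  simp

theorem douglasIntegral_eq_lintegral_translation (hF : AEStronglyMeasurable F haarAddCircle) :
    douglasIntegral F =
      ∫⁻ t, (∫⁻ x, ‖F (x + t) - F x‖ₑ ^ 2 ∂haarAddCircle) / ‖(toCircle t - 1 : ℂ)‖ₑ ^ 2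
        ∂haarAddCircle := by
  have h_chord (x t : AddCircle T) :
      ‖(toCircle x - toCircle (x + t) : ℂ)‖ₑ = ‖(toCircle t - 1 : ℂ)‖ₑ := by
    rw [toCircle_add, Circle.coe_mul, ← neg_sub, ← mul_sub_one, enorm_neg, enorm_mul,
      ← ofReal_norm, Circle.norm_coe, ENNReal.ofReal_one, one_mul]
  have h_translate (x : AddCircle T) :
      ∫⁻ y, ‖F x - F y‖ₑ ^ 2 / ‖(toCircle x - toCircle y : ℂ)‖ₑ ^ 2 ∂haarAddCircle =
        ∫⁻ t, ‖F (x + t) - F x‖ₑ ^ 2 / ‖(toCircle t - 1 : ℂ)‖ₑ ^ 2 ∂haarAddCircle := by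
    rw [← lintegral_add_left_eq_self _ x]
    simp_rw [h_chord, enorm_sub_rev (F x)]
  have h_meas : AEMeasurable (fun p : AddCircle T × AddCircle T ↦
      ‖F (p.1 + p.2) - F p.1‖ₑ ^ 2 / ‖(toCircle p.2 - 1 : ℂ)‖ₑ ^ 2)
      (haarAddCircle.prod haarAddCircle) := by
    have h_add := hF.comp_quasiMeasurePreserving
      (quasiMeasurePreserving_add haarAddCircle haarAddCircle)
    refine ((h_add.sub hF.comp_fst).enorm.pow_const 2).div ?_
    fun_prop
  simp_rw [douglasIntegral, h_translate]
  rw [lintegral_lintegral_swap h_meas]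
  refine lintegral_congr fun t ↦ ?_
  simp_rw [div_eq_mul_inv]
  refine lintegral_mul_const'' _ ?_
  exact ((hF.comp_measurePreserving (measurePreserving_add_right _ t)).sub hF).enorm.pow_const 2

theorem douglasIntegral_eq_tsum (hF : MemLp F 2 haarAddCircle) :
    douglasIntegral F = ∑' n : ℤ, n.natAbs * ‖fourierCoeff F n‖ₑ ^ 2 := by
  have h_parseval (t : AddCircle T) :
      ∫⁻ x, ‖F (x + t) - F x‖ₑ ^ 2 ∂haarAddCircle =
        ∑' n : ℤ, ‖fourier n t - 1‖ₑ ^ 2 * ‖fourierCoeff F n‖ₑ ^ 2 := by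
    have h_memLp : MemLp (fun x ↦ F (x + t) - F x) 2 haarAddCircle :=
      (hF.comp_measurePreserving (measurePreserving_add_right _ t)).sub hF
    rw [lintegral_enorm_sq_eq_tsum_fourierCoeff h_memLp]
    simp_rw [fourierCoeff_comp_add_right_sub (hF.integrable one_le_two), enorm_mul, mul_pow]
  simp_rw [douglasIntegral_eq_lintegral_translation hF.1, h_parseval, div_eq_mul_inv,
    ← ENNReal.tsum_mul_right, mul_right_comm _ (‖fourierCoeff F _‖ₑ ^ 2), ← div_eq_mul_inv]
  rw [lintegral_tsum fun n ↦ by fun_prop]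
  refine tsum_congr fun n ↦ ?_
  rw [lintegral_mul_const _ (by fun_prop), lintegral_enorm_fourier_sub_one_sq_div]

end Douglas

section Disc

local instance : Fact (0 < 2 * π) := ⟨Real.two_pi_pos⟩

theorem toCircle_coe (θ : ℝ) :
    (toCircle (θ : AddCircle (2 * π)) : ℂ) = Complex.exp (θ * Complex.I) := by
  rw [toCircle_apply_mk, div_self Real.two_pi_pos.ne', one_mul, Circle.coe_exp]

theorem norm_ofReal_mul_toCircle {r : ℝ} (hr : 0 ≤ r) (x : AddCircle (2 * π)) :
    ‖r * (toCircle x : ℂ)‖ = r := by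
  rw [norm_mul, Circle.norm_coe, mul_one, Complex.norm_of_nonneg hr]

theorem lintegral_eq_lintegral_circle {h : ℂ → ℝ≥0∞} (hh : Measurable h) :
    ∫⁻ z, h z = ENNReal.ofReal (2 * π) *
      ∫⁻ r in Set.Ioi (0 : ℝ), ENNReal.ofReal r *
        ∫⁻ x : AddCircle (2 * π), h (r * toCircle x) ∂haarAddCircle := by
  have h_polar (r θ : ℝ) :
      Complex.polarCoord.symm (r, θ) = r * toCircle (θ : AddCircle (2 * π)) := by
    rw [toCircle_coe, Complex.polarCoord_symm_apply, Complex.exp_mul_I]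
    push_cast
    rfl
  have h_angle (r : ℝ) :
      ∫⁻ θ in Set.Ioo (-π) π, ENNReal.ofReal r • h (Complex.polarCoord.symm (r, θ)) =
        ENNReal.ofReal (2 * π) * (ENNReal.ofReal r *
          ∫⁻ x : AddCircle (2 * π), h (r * toCircle x) ∂haarAddCircle) := by
    have h_end : -π + 2 * π = π := by ring
    simp_rw [h_polar, smul_eq_mul]
    rw [lintegral_const_mul' _ _ ENNReal.ofReal_ne_top, setLIntegral_congr Ioo_ae_eq_Ioc,
      mul_left_comm, ← setLIntegral_Ioc_coe_eq_haarAddCircle (-π), h_end]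
  have h_meas : Measurable fun p : ℝ × ℝ ↦
      ENNReal.ofReal p.1 • h (Complex.polarCoord.symm p) := by
    simp_rw [Complex.polarCoord_symm_apply, smul_eq_mul]
    fun_prop
  rw [← Complex.lintegral_comp_polarCoord_symm, polarCoord_target, Measure.volume_eq_prod,
    setLIntegral_prod _ h_meas.aemeasurable]
  simp_rw [h_angle]
  rw [lintegral_const_mul' _ _ ENNReal.ofReal_ne_top]

theorem lintegral_ball_eq_lintegral_circle {h : ℂ → ℝ≥0∞} (hh : Measurable h) :
    ∫⁻ z in Metric.ball 0 1, h z = ENNReal.ofReal (2 * π) *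
      ∫⁻ r in Set.Ioo (0 : ℝ) 1, ENNReal.ofReal r *
        ∫⁻ x : AddCircle (2 * π), h (r * toCircle x) ∂haarAddCircle := by
  have h_radius : ∀ r ∈ Set.Ioi (0 : ℝ), (ENNReal.ofReal r *
      ∫⁻ x : AddCircle (2 * π), (Metric.ball 0 1).indicator h (r * toCircle x) ∂haarAddCircle) =
        (Set.Ioo 0 1).indicator (fun r : ℝ ↦ ENNReal.ofReal r *
          ∫⁻ x : AddCircle (2 * π), h (r * toCircle x) ∂haarAddCircle) r := by
    intro r (hr : 0 < r)
    simp only [Set.indicator, mem_ball_zero_iff, norm_ofReal_mul_toCircle hr.le, Set.mem_Ioo, hr,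
      true_and]
    split_ifs <;> simp
  rw [← lintegral_indicator measurableSet_ball,
    lintegral_eq_lintegral_circle (hh.indicator measurableSet_ball),
    setLIntegral_congr_fun measurableSet_Ioi h_radius, setLIntegral_indicator measurableSet_Ioo,
    Set.inter_eq_left.2 Set.Ioo_subset_Ioi_self]

theorem setLIntegral_Ioo_zero_one_ofReal_pow (k : ℕ) :
    ∫⁻ r in Set.Ioo (0 : ℝ) 1, ENNReal.ofReal (r ^ k) = ((k : ℝ≥0∞) + 1)⁻¹ := by
  rw [setLIntegral_congr Ioo_ae_eq_Ioc, ← ofReal_integral_eq_lintegral_ofReal,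
    ← intervalIntegral.integral_of_le zero_le_one, integral_pow]
  · simp [ENNReal.ofReal_inv_of_pos (by positivity : 0 < (k : ℝ) + 1), ENNReal.ofReal_add]
  · exact (continuous_pow k).integrableOn_Ioc
  · filter_upwards [ae_restrict_mem measurableSet_Ioc] with r hr using pow_nonneg hr.1.le k

variable {g : ℂ → ℂ} {b : ℕ → ℂ}

theorem lintegral_circle_enorm_sq_of_hasSum {r : ℝ} (hr : 0 ≤ r)
    (hgb : ∀ z, ‖z‖ = r → HasSum (fun k ↦ b k * z ^ k) (g z)) :
    ∫⁻ x : AddCircle (2 * π), ‖g (r * toCircle x)‖ₑ ^ 2 ∂haarAddCircle =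
      ∑' k, ‖b k‖ₑ ^ 2 * ENNReal.ofReal (r ^ (2 * k)) := by
  have h_series (x : AddCircle (2 * π)) :
      g (r * toCircle x) = ∑' k : ℕ, b k * (r : ℂ) ^ k * fourier (k : ℤ) x := by
    rw [← (hgb _ (norm_ofReal_mul_toCircle hr x)).tsum_eq]
    simp_rw [fourier_natCast_eq_pow, mul_pow, mul_assoc]
  have h_summable : Summable fun k ↦ ‖b k * (r : ℂ) ^ k‖ :=
    (hgb r (Complex.norm_of_nonneg hr)).summable.norm
  simp_rw [h_series, lintegral_enorm_sq_tsum_mul_fourier Nat.cast_injective h_summable]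
  refine tsum_congr fun k ↦ ?_
  rw [enorm_mul, mul_pow, ← ofReal_norm ((r : ℂ) ^ k), ← ENNReal.ofReal_pow (norm_nonneg _),
    norm_pow, Complex.norm_of_nonneg hr, ← pow_mul, mul_comm k]

theorem lintegral_ball_enorm_sq_of_hasSum (hg : Measurable g)
    (hgb : ∀ z ∈ Metric.ball (0 : ℂ) 1, HasSum (fun k ↦ b k * z ^ k) (g z)) :
    ∫⁻ z in Metric.ball 0 1, ‖g z‖ₑ ^ 2 =
      ENNReal.ofReal π * ∑' k : ℕ, ‖b k‖ₑ ^ 2 / (k + 1) := by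
  have h_circle : ∀ r ∈ Set.Ioo (0 : ℝ) 1,
      (ENNReal.ofReal r *
        ∫⁻ x : AddCircle (2 * π), ‖g (r * toCircle x)‖ₑ ^ 2 ∂haarAddCircle) =
      ∑' k, ‖b k‖ₑ ^ 2 * ENNReal.ofReal (r ^ (2 * k + 1)) := by
    intro r hr
    rw [lintegral_circle_enorm_sq_of_hasSum hr.1.le fun z hz ↦
      hgb z (by simpa [hz] using hr.2), ← ENNReal.tsum_mul_left]
    refine tsum_congr fun k ↦ ?_
    rw [mul_left_comm, ← ENNReal.ofReal_mul hr.1.le, ← pow_succ']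
  rw [lintegral_ball_eq_lintegral_circle (hg.enorm.pow_const 2),
    setLIntegral_congr_fun measurableSet_Ioo h_circle, lintegral_tsum fun k ↦ by fun_prop,
    ← ENNReal.tsum_mul_left, ← ENNReal.tsum_mul_left]
  refine tsum_congr fun k ↦ ?_
  have h_inv : ((2 * k + 1 : ℕ) + 1 : ℝ≥0∞)⁻¹ = 2⁻¹ * ((k : ℝ≥0∞) + 1)⁻¹ := by
    rw [← ENNReal.mul_inv (by simp) (by simp)]
    push_cast
    ring_nf
  rw [lintegral_const_mul' _ _ (by finiteness), setLIntegral_Ioo_zero_one_ofReal_pow, h_inv,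
    ENNReal.ofReal_mul zero_le_two, ENNReal.ofReal_ofNat, div_eq_mul_inv]
  calc 2 * ENNReal.ofReal π * (‖b k‖ₑ ^ 2 * (2⁻¹ * (k + 1 : ℝ≥0∞)⁻¹))
    _ = 2 * 2⁻¹ * (ENNReal.ofReal π * (‖b k‖ₑ ^ 2 * (k + 1 : ℝ≥0∞)⁻¹)) := by ring
    _ = ENNReal.ofReal π * (‖b k‖ₑ ^ 2 * (k + 1 : ℝ≥0∞)⁻¹) := by
      rw [ENNReal.mul_inv_cancel two_ne_zero ENNReal.ofNat_ne_top, one_mul]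

end Disc

section PowerSeries

variable {c : ℕ → ℂ} {C r : ℝ} {z : ℂ}

theorem norm_mul_pow_le_of_mem_ball (hc : ∀ n, ‖c n‖ ≤ C) (n : ℕ) (hz : z ∈ Metric.ball 0 r) :
    ‖c n * z ^ n‖ ≤ C * r ^ n := by
  rw [norm_mul, norm_pow]
  gcongr
  · exact (norm_nonneg _).trans (hc n)
  · exact hc n
  · exact (mem_ball_zero_iff.1 hz).le

theorem differentiableAt_tsum_mul_pow (hc : ∀ n, ‖c n‖ ≤ C) (hz : ‖z‖ < 1) :
    DifferentiableAt ℂ (fun w ↦ ∑' n, c n * w ^ n) z := by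
  obtain ⟨r, hzr, hr⟩ := exists_between hz
  have h_geom := summable_geometric_of_lt_one ((norm_nonneg z).trans hzr.le) hr
  have h_diff := Complex.differentiableOn_tsum_of_summable_norm (h_geom.mul_left C)
    (fun n ↦ by fun_prop) Metric.isOpen_ball fun n w ↦ norm_mul_pow_le_of_mem_ball hc n
  exact h_diff.differentiableAt (Metric.isOpen_ball.mem_nhds (mem_ball_zero_iff.2 hzr))

theorem hasSum_deriv_tsum_mul_pow (hc : ∀ n, ‖c n‖ ≤ C) (hz : ‖z‖ < 1) :
    HasSum (fun k : ℕ ↦ (k + 1) * c (k + 1) * z ^ k) (deriv (fun w ↦ ∑' n, c n * w ^ n) z) := by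
  obtain ⟨r, hzr, hr⟩ := exists_between hz
  have h_geom := summable_geometric_of_lt_one ((norm_nonneg z).trans hzr.le) hr
  have h_termwise := Complex.hasSum_deriv_of_summable_norm (h_geom.mul_left C)
    (fun n ↦ by fun_prop) Metric.isOpen_ball
    (fun n w ↦ norm_mul_pow_le_of_mem_ball hc n) (mem_ball_zero_iff.2 hzr)
  rw [← hasSum_nat_add_iff' 1] at h_termwise
  simpa [mul_comm, mul_left_comm, mul_assoc] using h_termwise

end PowerSeries

theorem norm_fderiv_re {g : ℂ → ℂ} {g' z : ℂ} (hg : HasDerivAt g g' z) :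
    ‖fderiv ℝ (fun w ↦ (g w).re) z‖ = ‖g'‖ := by
  have h_fderiv : HasFDerivAt (fun w ↦ (g w).re) ((StrongDual.extendRCLikeₗᵢ (𝕜 := ℂ)).symm
      (ContinuousLinearMap.toSpanSingleton ℂ g')) z :=
    Complex.reCLM.hasFDerivAt.comp z (hg.hasFDerivAt.restrictScalars ℝ)
  rw [h_fderiv.fderiv, LinearIsometryEquiv.norm_map, ContinuousLinearMap.norm_toSpanSingleton]

theorem herglotzRieszKernel_zero_eq_two_mul_inv_sub_one {w z : ℂ} (hw : ‖w‖ = 1) (hzw : z ≠ w) :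
    herglotzRieszKernel 0 z w = 2 * (1 - starRingEnd ℂ w * z)⁻¹ - 1 := by
  have hw0 : w ≠ 0 := norm_ne_zero_iff.1 (hw ▸ one_ne_zero)
  have h_sub : w - z ≠ 0 := sub_ne_zero.2 hzw.symm
  rw [herglotzRieszKernel, ← Complex.inv_eq_conj hw, sub_zero, sub_zero]
  have h_inv : (1 - w⁻¹ * z)⁻¹ = w / (w - z) := by
    rw [← inv_div, sub_div, div_self hw0, inv_mul_eq_div]
  rw [h_inv]
  field_simp
  ring

theorem one_sub_conj_mul_ne_zero (w : Circle) {z : ℂ} (hz : ‖z‖ < 1) :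
    1 - starRingEnd ℂ w * z ≠ 0 := by
  refine sub_ne_zero.2 fun h ↦ hz.ne ?_
  simpa only [norm_mul, RCLike.norm_conj, Circle.norm_coe, one_mul, norm_one] using
    congr_arg norm h.symm

section Szego

variable {T : ℝ} [Fact (0 < T)] {F : AddCircle T → ℂ} {u : AddCircle T → ℝ} {z : ℂ}

/-- The Szegő projection of a function `F` on the circle: the sum, at a point `z` of the unit
disc, of the nonnegative-frequency part of its Fourier series. -/
noncomputable def szegoProjection (F : AddCircle T → ℂ) (z : ℂ) : ℂ :=
  ∑' n : ℕ, fourierCoeff F n * z ^ n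

/-- The Poisson integral, at a point `z` of the unit disc, of a function `u` on the circle. -/
noncomputable def poissonIntegral (u : AddCircle T → ℝ) (z : ℂ) : ℝ :=
  ∫ x, poissonKernel 0 z (toCircle x) * u x ∂haarAddCircle

theorem szegoProjection_eq_integral (hF : Integrable F haarAddCircle) (hz : ‖z‖ < 1) :
    szegoProjection F z =
      ∫ x, (1 - starRingEnd ℂ (toCircle x) * z)⁻¹ * F x ∂haarAddCircle := by
  have h_char (n : ℕ) (x : AddCircle T) :
      fourier (-(n : ℤ)) x = starRingEnd ℂ (toCircle x) ^ n := by
    rw [fourier_neg, fourier_natCast_eq_pow, map_pow]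
  have h_norm (n : ℕ) (x : AddCircle T) :
      ‖fourier (-(n : ℤ)) x * F x * z ^ n‖ = ‖F x‖ * ‖z‖ ^ n := by
    rw [norm_mul, norm_mul, norm_fourier_apply, one_mul, norm_pow]
  have h_summable :
      Summable fun n : ℕ ↦ ∫ x, ‖fourier (-(n : ℤ)) x * F x * z ^ n‖ ∂haarAddCircle := by
    simp_rw [h_norm, integral_mul_const]
    exact (summable_geometric_of_lt_one (norm_nonneg z) hz).mul_left _
  have h_integrable (n : ℕ) :
      Integrable (fun x ↦ fourier (-(n : ℤ)) x * F x * z ^ n) haarAddCircle := by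
    refine (hF.bdd_mul (c := 1) (by fun_prop) (.of_forall fun x ↦ ?_)).mul_const _
    rw [norm_fourier_apply]
  have h_geom (x : AddCircle T) :
      ∑' n : ℕ, fourier (-(n : ℤ)) x * F x * z ^ n =
        (1 - starRingEnd ℂ (toCircle x) * z)⁻¹ * F x := by
    have h_lt : ‖starRingEnd ℂ (toCircle x) * z‖ < 1 := by
      rwa [norm_mul, RCLike.norm_conj, Circle.norm_coe, one_mul]
    rw [← tsum_geometric_of_norm_lt_one h_lt, ← tsum_mul_right]
    simp_rw [h_char, mul_pow, mul_right_comm]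
  simp_rw [szegoProjection, fourierCoeff, smul_eq_mul, ← integral_mul_const, ← h_geom]
  exact integral_tsum_of_summable_integral_norm h_integrable h_summable

theorem poissonIntegral_eq_szegoProjection (hu : Integrable u haarAddCircle) (hz : ‖z‖ < 1) :
    poissonIntegral u z =
      2 * (szegoProjection (fun x ↦ (u x : ℂ)) z).re - ∫ x, u x ∂haarAddCircle := by
  have h_kernel (x : AddCircle T) : poissonKernel 0 z (toCircle x) =
      2 * ((1 - starRingEnd ℂ (toCircle x) * z)⁻¹).re - 1 := by
    have hzx : z ≠ toCircle x := fun h ↦ hz.ne (h ▸ Circle.norm_coe _)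
    rw [poissonKernel_eq_re_herglotzRieszKernel, Function.comp_apply,
      herglotzRieszKernel_zero_eq_two_mul_inv_sub_one (Circle.norm_coe _) hzx]
    simp
  have h_cont : Continuous fun x : AddCircle T ↦ (1 - starRingEnd ℂ (toCircle x) * z)⁻¹ :=
    Continuous.inv₀ (by fun_prop) fun x ↦ one_sub_conj_mul_ne_zero (toCircle x) hz
  obtain ⟨C, hC⟩ := isCompact_univ.exists_bound_of_continuousOn h_cont.continuousOn
  have h_integrable : Integrable
      (fun x ↦ (1 - starRingEnd ℂ (toCircle x) * z)⁻¹ * (u x : ℂ)) haarAddCircle :=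
    (hu.ofReal (𝕜 := ℂ)).bdd_mul h_cont.aestronglyMeasurable (.of_forall fun x ↦ hC x trivial)
  rw [szegoProjection_eq_integral (F := fun x ↦ (u x : ℂ)) hu.ofReal hz, ← RCLike.re_eq_complex_re,
    ← integral_re h_integrable, ← integral_const_mul,
    ← integral_sub (h_integrable.re.const_mul 2) hu, poissonIntegral]
  refine integral_congr_ae (.of_forall fun x ↦ ?_)
  simp only [h_kernel, RCLike.re_eq_complex_re, Complex.re_mul_ofReal]
  ring

theorem enorm_fderiv_poissonIntegral (hu : Integrable u haarAddCircle) (hz : ‖z‖ < 1) :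
    ‖fderiv ℝ (poissonIntegral u) z‖ₑ = 2 * ‖deriv (szegoProjection fun x ↦ (u x : ℂ)) z‖ₑ := by
  have h_near : poissonIntegral u =ᶠ[nhds z]
      fun w ↦ (2 * szegoProjection (fun x ↦ (u x : ℂ)) w - (∫ x, u x ∂haarAddCircle : ℝ)).re := by
    filter_upwards [Metric.isOpen_ball.mem_nhds (mem_ball_zero_iff.2 hz)] with w hw
    rw [poissonIntegral_eq_szegoProjection hu (mem_ball_zero_iff.1 hw)]
    simp
  have h_deriv : HasDerivAt (szegoProjection fun x ↦ (u x : ℂ))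
      (deriv (szegoProjection fun x ↦ (u x : ℂ)) z) z :=
    (differentiableAt_tsum_mul_pow (fun n ↦ norm_fourierCoeff_le _ n) hz).hasDerivAt
  rw [← ofReal_norm, h_near.fderiv_eq, norm_fderiv_re ((h_deriv.const_mul 2).sub_const _),
    ofReal_norm, enorm_mul]
  simp [← ofReal_norm (2 : ℂ)]

theorem lintegral_ball_enorm_deriv_szegoProjection (F : AddCircle T → ℂ) :
    ∫⁻ z in Metric.ball 0 1, ‖deriv (szegoProjection F) z‖ₑ ^ 2 =
      ENNReal.ofReal π * ∑' k : ℕ, (k + 1) * ‖fourierCoeff F (k + 1)‖ₑ ^ 2 := by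
  have h_series : ∀ z ∈ Metric.ball (0 : ℂ) 1, HasSum
      (fun k : ℕ ↦ (k + 1) * fourierCoeff F (k + 1) * z ^ k) (deriv (szegoProjection F) z) := by
    intro z hz
    simp_rw [← Nat.cast_succ (R := ℤ)]
    exact hasSum_deriv_tsum_mul_pow (c := fun n : ℕ ↦ fourierCoeff F n)
      (fun n ↦ norm_fourierCoeff_le F n) (mem_ball_zero_iff.1 hz)
  rw [lintegral_ball_enorm_sq_of_hasSum (measurable_deriv _) h_series]
  congr 1
  refine tsum_congr fun k ↦ ?_
  have h_enorm : ‖(k + 1 : ℂ)‖ₑ = k + 1 := by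
    rw [← Nat.cast_succ, ← ofReal_norm, Complex.norm_natCast, ENNReal.ofReal_natCast,
      Nat.cast_succ]
  rw [enorm_mul, mul_pow, h_enorm, sq (k + 1 : ℝ≥0∞), mul_assoc, mul_comm (k + 1 : ℝ≥0∞),
    ENNReal.mul_div_cancel_right (by simp) (by finiteness)]

theorem douglasIntegral_ofReal_eq_tsum (hu : MemLp (fun x ↦ (u x : ℂ)) 2 haarAddCircle) :
    douglasIntegral (fun x ↦ (u x : ℂ)) =
      2 * ∑' k : ℕ, (k + 1) * ‖fourierCoeff (fun x ↦ (u x : ℂ)) (k + 1)‖ₑ ^ 2 := by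
  have h_even (k : ℕ) :
      (-(k + 1 : ℤ)).natAbs * ‖fourierCoeff (fun x ↦ (u x : ℂ)) (-(k + 1 : ℤ))‖ₑ ^ 2 =
        (k + 1) * ‖fourierCoeff (fun x ↦ (u x : ℂ)) (k + 1)‖ₑ ^ 2 := by
    rw [← ofReal_norm, norm_fourierCoeff_neg_ofReal, ofReal_norm, Int.natAbs_neg]
    norm_cast
  rw [douglasIntegral_eq_tsum hu, tsum_of_nat_of_neg_add_one ENNReal.summable ENNReal.summable,
    tsum_eq_zero_add' ENNReal.summable]
  simp_rw [h_even, Int.natAbs_natCast]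
  simp [two_mul]

theorem lintegral_ball_enorm_fderiv_poissonIntegral
    (hu : MemLp (fun x ↦ (u x : ℂ)) 2 haarAddCircle) :
    ∫⁻ z in Metric.ball 0 1, ‖fderiv ℝ (poissonIntegral u) z‖ₑ ^ 2 =
      ENNReal.ofReal (2 * π) * douglasIntegral fun x ↦ (u x : ℂ) := by
  have h_integrable : Integrable u haarAddCircle := by
    simpa using (hu.integrable one_le_two).re
  have h_fderiv : ∀ z ∈ Metric.ball (0 : ℂ) 1, ‖fderiv ℝ (poissonIntegral u) z‖ₑ ^ 2 =
      2 ^ 2 * ‖deriv (szegoProjection fun x ↦ (u x : ℂ)) z‖ₑ ^ 2 := by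
    intro z hz
    rw [enorm_fderiv_poissonIntegral h_integrable (mem_ball_zero_iff.1 hz), mul_pow]
  rw [setLIntegral_congr_fun measurableSet_ball h_fderiv,
    lintegral_const_mul' _ _ (by finiteness), lintegral_ball_enorm_deriv_szegoProjection,
    douglasIntegral_ofReal_eq_tsum hu, ENNReal.ofReal_mul zero_le_two, ENNReal.ofReal_ofNat]
  ring

end Szego

section PeriodInterval

local instance : Fact (0 < 2 * π) := ⟨Real.two_pi_pos⟩

theorem poissonExtension_eq_poissonIntegral (f : ℝ → ℝ) :
    poissonExtension f = poissonIntegral (liftIoc (2 * π) 0 f) := by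
  ext z
  rw [poissonIntegral, integral_haarAddCircle, ← AddCircle.intervalIntegral_preimage _ 0, zero_add,
    smul_eq_mul, poissonExtension, one_div]
  congr 1
  refine intervalIntegral.integral_congr_uIoo fun θ hθ ↦ ?_
  rw [Set.uIoo_of_le Real.two_pi_pos.le] at hθ
  have h_mem : θ ∈ Set.Ioc 0 (0 + 2 * π) := by rw [zero_add]; exact Set.Ioo_subset_Ioc_self hθ
  rw [liftIoc_coe_apply h_mem, toCircle_coe, poissonKernel, sub_zero, sub_zero,
    Complex.norm_exp_ofReal_mul_I, one_pow, norm_sub_rev]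

theorem norm_toCircle_coe_sub_toCircle_coe_sq (θ φ : ℝ) :
    ‖(toCircle (θ : AddCircle (2 * π)) - toCircle (φ : AddCircle (2 * π)) : ℂ)‖ ^ 2 =
      2 * (1 - Real.cos (θ - φ)) := by
  rw [toCircle_coe, toCircle_coe, Complex.sq_norm, Complex.normSq_apply]
  simp only [Complex.sub_re, Complex.sub_im, Complex.exp_ofReal_mul_I_re,
    Complex.exp_ofReal_mul_I_im, Real.cos_sub]
  linear_combination Real.sin_sq_add_cos_sq θ + Real.sin_sq_add_cos_sq φ

theorem ofReal_sq_sub_div_one_sub_cos (u : AddCircle (2 * π) → ℝ) (θ φ : ℝ) :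
    ENNReal.ofReal ((u θ - u φ) ^ 2 / (1 - Real.cos (θ - φ))) =
      2 * (‖(u θ - u φ : ℂ)‖ₑ ^ 2 /
        ‖(toCircle (θ : AddCircle (2 * π)) - toCircle (φ : AddCircle (2 * π)) : ℂ)‖ₑ ^ 2) := by
  by_cases h : (θ : AddCircle (2 * π)) = φ
  · simp [h]
  have h_chord : 0 < ‖(toCircle (θ : AddCircle (2 * π)) - toCircle (φ : AddCircle (2 * π)) : ℂ)‖ :=
    norm_sub_pos_iff.2 fun h_eq ↦ h (injective_toCircle Real.two_pi_pos.ne' (Circle.ext h_eq))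
  have h_kernel : (u θ - u φ) ^ 2 / (1 - Real.cos (θ - φ)) = 2 * (‖(u θ - u φ : ℂ)‖ ^ 2 /
      ‖(toCircle (θ : AddCircle (2 * π)) - toCircle (φ : AddCircle (2 * π)) : ℂ)‖ ^ 2) := by
    rw [norm_toCircle_coe_sub_toCircle_coe_sq, ← Complex.ofReal_sub, Complex.norm_real,
      Real.norm_eq_abs, sq_abs, ← mul_div_assoc, mul_div_mul_left _ _ two_ne_zero]
  rw [h_kernel, ENNReal.ofReal_mul zero_le_two, ENNReal.ofReal_ofNat,
    ENNReal.ofReal_div_of_pos (pow_pos h_chord 2), ENNReal.ofReal_pow (norm_nonneg _),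
    ENNReal.ofReal_pow (norm_nonneg _), ofReal_norm, ofReal_norm]

theorem lintegral_Ioc_lintegral_Ioc_eq_douglasIntegral (u : AddCircle (2 * π) → ℝ) :
    ∫⁻ θ : ℝ in Set.Ioc 0 (2 * π), ∫⁻ φ : ℝ in Set.Ioc 0 (2 * π),
        ENNReal.ofReal ((u θ - u φ) ^ 2 / (1 - Real.cos (θ - φ))) =
      ENNReal.ofReal (8 * π ^ 2) * douglasIntegral fun x ↦ (u x : ℂ) := by
  have h_const : ENNReal.ofReal (8 * π ^ 2) =
      2 * (ENNReal.ofReal (2 * π) * ENNReal.ofReal (2 * π)) := by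
    rw [← ENNReal.ofReal_mul (by positivity), ← ENNReal.ofReal_ofNat 2,
      ← ENNReal.ofReal_mul zero_le_two]
    ring_nf
  have h_double := setLIntegral_Ioc_setLIntegral_Ioc_coe_eq_haarAddCircle 0
    fun x y : AddCircle (2 * π) ↦ ‖(u x - u y : ℂ)‖ₑ ^ 2 / ‖(toCircle x - toCircle y : ℂ)‖ₑ ^ 2
  rw [zero_add] at h_double
  simp_rw [ofReal_sq_sub_div_one_sub_cos, lintegral_const_mul' _ _ ENNReal.ofNat_ne_top]
  rw [h_double, h_const, douglasIntegral]
  ring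

theorem lintegral_Ioc_lintegral_Ioc_liftIoc (f : ℝ → ℝ) :
    ∫⁻ θ : ℝ in Set.Ioc 0 (2 * π), ∫⁻ φ : ℝ in Set.Ioc 0 (2 * π),
        ENNReal.ofReal ((liftIoc (2 * π) 0 f θ - liftIoc (2 * π) 0 f φ) ^ 2 /
          (1 - Real.cos (θ - φ))) =
      ∫⁻ θ in Set.Ioc 0 (2 * π), ∫⁻ φ in Set.Ioc 0 (2 * π),
        ENNReal.ofReal ((f θ - f φ) ^ 2 / (1 - Real.cos (θ - φ))) := by
  have h_lift : ∀ θ ∈ Set.Ioc 0 (2 * π), liftIoc (2 * π) 0 f θ = f θ := fun θ hθ ↦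
    liftIoc_coe_apply (by rwa [zero_add])
  refine setLIntegral_congr_fun measurableSet_Ioc fun θ hθ ↦
    setLIntegral_congr_fun measurableSet_Ioc fun φ hφ ↦ ?_
  rw [h_lift θ hθ, h_lift φ hφ]

theorem douglas_formula_general (f : ℝ → ℝ)
    (hf : MemLp f 2 (volume.restrict (Set.Ioc 0 (2 * π)))) :
    ENNReal.ofReal (1 / 2) *
        ∫⁻ x in Metric.ball (0 : ℂ) 1,
          ENNReal.ofReal (‖fderiv ℝ (poissonExtension f) x‖ ^ 2)
      = ENNReal.ofReal (1 / (8 * Real.pi)) *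
        ∫⁻ θ in Set.Ioc (0 : ℝ) (2 * Real.pi),
          ∫⁻ φ in Set.Ioc (0 : ℝ) (2 * Real.pi),
            ENNReal.ofReal ((f θ - f φ) ^ 2 / (1 - Real.cos (θ - φ))) := by
  have h_memLp : MemLp (fun x ↦ ((liftIoc (2 * π) 0 f x : ℝ) : ℂ)) 2 haarAddCircle := by
    have h_ofReal : MemLp (fun θ ↦ (f θ : ℂ)) 2 (volume.restrict (Set.Ioc 0 (0 + 2 * π))) := by
      rw [zero_add]
      exact hf.ofReal
    exact h_ofReal.memLp_liftIoc.haarAddCircle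
  simp_rw [ENNReal.ofReal_pow (norm_nonneg _), ofReal_norm, poissonExtension_eq_poissonIntegral]
  rw [lintegral_ball_enorm_fderiv_poissonIntegral h_memLp,
    ← lintegral_Ioc_lintegral_Ioc_liftIoc, lintegral_Ioc_lintegral_Ioc_eq_douglasIntegral,
    ← mul_assoc, ← mul_assoc,
    ← ENNReal.ofReal_mul (by positivity), ← ENNReal.ofReal_mul (by positivity)]
  congr 2
  field_simp

end PeriodInterval

/-- (Douglas formula.)  Let `f : ℝ → ℝ` be continuous and `2π`-periodic,
regarded as a function on the boundary of the unit disk `D`, and let `Hf` be its harmonic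
(Poisson) extension to `D`.  Then, as an equality in `[0,∞]`,
`(1/2) ∫_D ‖∇Hf(x)‖² dx = (1/8π) ∫_0^{2π} ∫_0^{2π} (f(θ) - f(φ))²/(1 - cos(θ - φ)) dθ dφ`. -/
theorem douglas_formula
    (f : ℝ → ℝ) (hf : Continuous f) (hper : Function.Periodic f (2 * Real.pi)) :
    ENNReal.ofReal (1 / 2) *
        ∫⁻ x in Metric.ball (0 : ℂ) 1,
          ENNReal.ofReal (‖fderiv ℝ (poissonExtension f) x‖ ^ 2)
      = ENNReal.ofReal (1 / (8 * Real.pi)) *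
        ∫⁻ θ in Set.Ioc (0 : ℝ) (2 * Real.pi),
          ∫⁻ φ in Set.Ioc (0 : ℝ) (2 * Real.pi),
            ENNReal.ofReal ((f θ - f φ) ^ 2 / (1 - Real.cos (θ - φ))) := by
  exact douglas_formula_general f
    ((memLp_two_iff_integrable_sq hf.aestronglyMeasurable).2 (hf.pow 2).integrableOn_Ioc)
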